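/- For every integer n ≥ 6, the averaged-prime analogue of the Nicholson conjecture holds: (p̄_{n+1} / p̄_n)^n < (n/2)·ln(n/2). -/

import Mathlib

open Finset Real

/-- `nthPrime n` is the n-th prime number with 1-based indexing:
`nthPrime 1 = 2`, `nthPrime 2 = 3`, `nthPrime 3 = 5`, ... -/
noncomputable def nthPrime (n : ℕ) : ℕ := Nat.nth Nat.Prime (n - 1)

/-- The arithmetic average of the first `n` primes. -/
noncomputable def avgPrime (n : ℕ) : ℝ := (1 / (n : ℝ)) * ∑ i ∈ Finset.Icc 1 n, (nthPrime i : ℝ)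

/-- The gap in the averaged primes. -/
noncomputable def avgGap (n : ℕ) : ℝ := avgPrime (n + 1) - avgPrime n

/-- The averaged-prime counting function `π̄(x) = #{i ≥ 1 : p̄_i ≤ x}`. -/
noncomputable def avgPrimeCount (x : ℝ) : ℕ := Nat.card {i : ℕ | 1 ≤ i ∧ avgPrime i ≤ x}

/-- The ordinary prime counting function for a real argument. -/
noncomputable def primeCount (x : ℝ) : ℕ := Nat.card {q : ℕ | q.Prime ∧ (q : ℝ) ≤ x}

lemma sum_nth_count (m : ℕ) : ∑ i ∈ Finset.range (Nat.count Nat.Prime m), Nat.nth Nat.Prime i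
    = ∑ p ∈ (Finset.range m).filter Nat.Prime, p := by
  induction m with
  | zero => simp
  | succ m ih =>
    rw [Nat.count_succ, Finset.range_add_one, Finset.filter_insert]
    by_cases h : m.Prime
    · rw [if_pos h, if_pos h, Finset.sum_range_succ, ih, Nat.nth_count h,
        Finset.sum_insert (by simp), add_comm]
    · rw [if_neg h, if_neg h, ← ih]; simp

lemma count_step (m : ℕ) (hm : 6 ≤ m) :
    Nat.count Nat.Prime (m + 30) ≤ Nat.count Nat.Prime m + 8 := by
  rw [Nat.count_eq_card_filter_range, Nat.count_eq_card_filter_range]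
  have h8 : ((Finset.Ico m (m + 30)).filter (Nat.Coprime 30)).card = 8 := by
    rw [Nat.filter_coprime_Ico_eq_totient]; decide +kernel
  rw [← h8]
  refine le_trans (Finset.card_le_card ?_) (Finset.card_union_le _ _)
  intro p hp
  simp only [Finset.mem_filter, Finset.mem_range, Finset.mem_union, Finset.mem_Ico] at hp ⊢
  rcases lt_or_ge p m with h | h
  · exact Or.inl ⟨h, hp.2⟩
  · refine Or.inr ⟨⟨h, hp.1⟩, ?_⟩
    rw [Nat.coprime_comm, Nat.Prime.coprime_iff_not_dvd hp.2]
    intro hd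
    have h5 : p ∣ 2 * (3 * 5) := hd
    rw [hp.2.dvd_mul, hp.2.dvd_mul] at h5
    rcases h5 with h5 | h5 | h5
    all_goals have := Nat.le_of_dvd (by norm_num) h5; omega

lemma count_bd (m : ℕ) : 15 * Nat.count Nat.Prime m ≤ 4 * m + 40 := by
  induction m using Nat.strong_induction_on with
  | _ m ih =>
    rcases lt_or_ge m 36 with h | h
    · have : ∀ m < 36, 15 * Nat.count Nat.Prime m ≤ 4 * m + 40 := by decide +kernel
      exact this m h
    · have h1 := ih (m - 30) (by omega)
      have h2 := count_step (m - 30) (by omega)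
      rw [show m - 30 + 30 = m by omega] at h2
      omega

lemma nth_bd (k : ℕ) : 15 * k ≤ 4 * Nat.nth Nat.Prime k + 29 := by
  have h := count_bd (Nat.nth Nat.Prime k + 1)
  rw [Nat.count_nth_succ_of_infinite Nat.infinite_setOfPred_prime] at h
  omega

lemma sum_bd (n : ℕ) : 15 * n ^ 2 ≤ 8 * ∑ i ∈ Finset.range n, Nat.nth Nat.Prime i + 73 * n := by
  induction n with
  | zero => simp
  | succ n ih =>
    rw [Finset.sum_range_succ]
    have := nth_bd n
    nlinarith

/-- fuel, current number, count, sum -/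
def chk : ℕ → ℕ → ℕ → ℕ → Bool
  | 0, _, c, _ => decide (100 ≤ c)
  | f + 1, m, c, s =>
    if m.Prime then (decide (c < 8) || decide (100 * (c * m) ≤ 262 * s)) && chk f (m + 1) (c + 1) (s + m)
    else chk f (m + 1) c s

lemma chk_sound (f m : ℕ) (h : chk f m (Nat.count Nat.Prime m)
      (∑ p ∈ (Finset.range m).filter Nat.Prime, p) = true) :
    100 ≤ Nat.count Nat.Prime (m + f) ∧ ∀ q, m ≤ q → q < m + f → q.Prime →
      8 ≤ Nat.count Nat.Prime q →
      100 * (Nat.count Nat.Prime q * q) ≤ 262 * ∑ p ∈ (Finset.range q).filter Nat.Prime, p := by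
  induction f generalizing m with
  | zero => 
    simp only [chk, decide_eq_true_eq] at h
    exact ⟨h, fun q h1 h2 => by omega⟩
  | succ f ih =>
    have e : m + (f + 1) = m + 1 + f := by ring
    rw [e]
    by_cases hp : m.Prime
    · simp only [chk, if_pos hp, Bool.and_eq_true, Bool.or_eq_true, decide_eq_true_eq] at h
      have := ih (m + 1) (by
        rw [Nat.count_succ, Finset.range_add_one, Finset.filter_insert, if_pos hp, if_pos hp,
          Finset.sum_insert (by simp), add_comm m (Finset.sum _ _)]
        exact h.2)
      refine ⟨this.1, fun q h1 h2 h3 h4 => ?_⟩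
      rcases h1.eq_or_lt with rfl | h1
      · rcases h.1 with h | h
        · omega
        · exact h
      · exact this.2 q h1 h2 h3 h4
    · simp only [chk, if_neg hp] at h
      have := ih (m + 1) (by
        rw [Nat.count_succ, Finset.range_add_one, Finset.filter_insert, if_neg hp, if_neg hp]
        exact h)
      refine ⟨this.1, fun q h1 h2 h3 h4 => ?_⟩
      rcases h1.eq_or_lt with rfl | h1
      · exact absurd h3 hp
      · exact this.2 q h1 h2 h3 h4

lemma small (n : ℕ) (h8 : 8 ≤ n) (h : n < 100) :
    100 * (n * Nat.nth Nat.Prime n) ≤ 262 * ∑ i ∈ Finset.range n, Nat.nth Nat.Prime i := by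
  have hc : chk 542 0 0 0 = true := by decide +kernel
  obtain ⟨h1, h2⟩ := chk_sound 542 0 (by simpa using hc)
  have := h2 (Nat.nth Nat.Prime n) (Nat.zero_le _)
    (Nat.nth_lt_of_lt_count (by omega)) (Nat.prime_nth_prime n)
  rw [← sum_nth_count, Nat.count_nth_of_infinite Nat.infinite_setOfPred_prime] at this
  exact this h8

lemma sum_eq (n : ℕ) : ∑ i ∈ Finset.Icc 1 n, (nthPrime i : ℝ)
    = ((∑ i ∈ Finset.range n, Nat.nth Nat.Prime i : ℕ) : ℝ) := by
  induction n with
  | zero => simp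
  | succ n ih =>
    rw [Finset.sum_Icc_succ_top (by omega), ih, Finset.sum_range_succ]
    simp [nthPrime]

lemma ratio_eq (n : ℕ) (hn : 1 ≤ n) (S : ℝ) (hS : 0 < S)
    (h : ((∑ i ∈ Finset.range n, Nat.nth Nat.Prime i : ℕ) : ℝ) = S) :
    avgPrime (n + 1) / avgPrime n = n / (n + 1) * (1 + Nat.nth Nat.Prime n / S) := by
  unfold avgPrime
  rw [sum_eq, sum_eq, Finset.sum_range_succ, Nat.cast_add, h]
  have : (0 : ℝ) < n := by exact_mod_cast hn
  push_cast at h ⊢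
  field_simp
  rw [h]

lemma key (n : ℕ) (hn : 1 ≤ n) (B : ℝ) (hB : 0 ≤ B)
    (h : (n : ℝ) * Nat.nth Nat.Prime n
      ≤ (1 + B) * ((∑ i ∈ Finset.range n, Nat.nth Nat.Prime i : ℕ) : ℝ)) :
    (avgPrime (n + 1) / avgPrime n) ^ n ≤ Real.exp B := by
  have hn0 : (0 : ℝ) < n := by exact_mod_cast hn
  have hS : (0 : ℝ) < ((∑ i ∈ Finset.range n, Nat.nth Nat.Prime i : ℕ) : ℝ) := by
    have : 0 < ∑ i ∈ Finset.range n, Nat.nth Nat.Prime i :=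
      Finset.sum_pos (fun i _ => (Nat.prime_nth_prime i).pos) ⟨0, by simp; omega⟩
    exact_mod_cast this
  rw [ratio_eq n hn _ hS rfl]
  set S := ((∑ i ∈ Finset.range n, Nat.nth Nat.Prime i : ℕ) : ℝ)
  have h1 : (n : ℝ) / (n + 1) * (1 + Nat.nth Nat.Prime n / S) ≤ B / n + 1 := by
    have : (n : ℝ) / (n + 1) * (1 + Nat.nth Nat.Prime n / S) ≤ B / (n + 1) + 1 := by
      have e : (n : ℝ) / (n + 1) * (1 + Nat.nth Nat.Prime n / S)
        = (n + n * Nat.nth Nat.Prime n / S) / (n + 1) := by field_simp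
      rw [e, div_add_one (by positivity)]
      have := (div_le_iff₀ hS).2 h
      exact div_le_div_of_nonneg_right (by linarith) (by positivity)
    refine this.trans ?_
    gcongr
    linarith
  calc _ ≤ (Real.exp (B / n)) ^ n := by
        gcongr
        exact h1.trans (Real.add_one_le_exp _)
    _ = Real.exp B := by rw [← Real.exp_nat_mul]; congr 1; field_simp

lemma q_bd (n : ℕ) (hn : 100 ≤ n) :
    (Nat.nth Nat.Prime n : ℝ) ≤ n * (1.6033 * Real.log n + 2.855) := by
  set q := Nat.nth Nat.Prime n with hq
  have hq1 : 1 ≤ q := (Nat.prime_nth_prime n).one_lt.le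
  have hpi : Nat.primeCounting (q - 1) = n := by
    rw [Nat.primeCounting_sub_one, Nat.primeCounting'_nth_eq]
  have h1 := Chebyshev.psi_ge (q - 1)
  have h2 := Chebyshev.psi_le_primeCounting_mul_log (q - 1)
  rw [hpi] at h2
  have hN : (100 : ℝ) ≤ n := by exact_mod_cast hn
  have hq0 : (1 : ℝ) ≤ q := by exact_mod_cast hq1
  have hq2 : (1 : ℝ) < q := by exact_mod_cast (Nat.prime_nth_prime n).one_lt
  rw [Nat.cast_sub hq1, Nat.cast_one] at h1 h2
  rw [sub_add_cancel] at h1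
  have h3 : Real.log ((q : ℝ) - 1) ≤ Real.log q :=
    Real.log_le_log (by linarith) (by linarith)
  have h4 : ((q : ℝ) - 1) * Real.log 2 ≤ (n + 1) * Real.log q := by nlinarith
  have h5 : Real.log q ≤ Real.log n + 4 * Real.log 2 + q / (n * 16) - 1 := by
    have := Real.log_le_sub_one_of_pos (show (0 : ℝ) < q / (n * 16) by positivity)
    rw [Real.log_div (by positivity) (by positivity), Real.log_mul (by positivity) (by positivity),
      show (16 : ℝ) = 2 ^ 4 by norm_num, Real.log_pow] at this
    push_cast at this
    norm_num at this ⊢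
    linarith
  have l1 := Real.log_two_gt_d9
  have l2 := Real.log_two_lt_d9
  have hx : 0 ≤ Real.log n := Real.log_nonneg (by linarith)
  set x := Real.log n
  have hn0 : (0 : ℝ) < n := by linarith
  obtain ⟨t, ht⟩ : ∃ t : ℝ, (q : ℝ) = n * t := ⟨q / n, by field_simp⟩
  have ht0 : 0 ≤ t := by
    by_contra hh
    nlinarith
  have e : (q : ℝ) / (n * 16) = t / 16 := by rw [ht]; field_simp
  rw [e] at h5
  have h6 : (n : ℝ) * t * 0.69314718 ≤ (n + 1) * (x + 1.7726 + t / 16) + 0.7 := by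
    have : ((n : ℝ) + 1) * Real.log q ≤ (n + 1) * (x + 1.7726 + t / 16) := by
      gcongr; linarith
    rw [ht] at h4
    have : (n : ℝ) * t * 0.69314718 ≤ n * t * Real.log 2 := by gcongr; linarith
    nlinarith
  have h7 : ((n : ℝ) + 1) * (x + 1.7726 + t / 16) ≤ 1.01 * n * (x + 1.7726 + t / 16) := by
    gcongr; linarith
  have h8 : t * 0.69314718 ≤ 1.01 * (x + 1.7726 + t / 16) + 0.007 := by
    have : (n : ℝ) * (t * 0.69314718) ≤ n * (1.01 * (x + 1.7726 + t / 16) + 0.007) := by nlinarith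
    exact le_of_mul_le_mul_left this hn0
  rw [ht]
  gcongr
  linarith

lemma large (n : ℕ) (hn : 100 ≤ n) :
    (avgPrime (n + 1) / avgPrime n) ^ n < ((n : ℝ) / 2) * Real.log ((n : ℝ) / 2) := by
  have hN : (100 : ℝ) ≤ n := by exact_mod_cast hn
  have l1 := Real.log_two_gt_d9
  have l2 := Real.log_two_lt_d9
  have hx : 4.15 ≤ Real.log n := by
    have : Real.log ((2 : ℝ) ^ 6) ≤ Real.log n := Real.log_le_log (by norm_num) (by linarith)
    rw [Real.log_pow] at this
    push_cast at this
    linarith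
  have hl : Real.log ((n : ℝ) / 2) = Real.log n - Real.log 2 :=
    Real.log_div (by positivity) (by norm_num)
  have hq := q_bd n hn
  have hS : (15 : ℝ) * n ^ 2 ≤ 8 * ((∑ i ∈ Finset.range n, Nat.nth Nat.Prime i : ℕ) : ℝ) + 73 * n := by
    exact_mod_cast sum_bd n
  have hk := key n (by omega) (Real.log ((n : ℝ) / 2) + 1) (by rw [hl]; linarith) (by
    rw [hl]
    set S := ((∑ i ∈ Finset.range n, Nat.nth Nat.Prime i : ℕ) : ℝ)
    set x := Real.log n
    have hS' : 1.78375 * (n : ℝ) ^ 2 ≤ S := by nlinarith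
    calc (n : ℝ) * Nat.nth Nat.Prime n ≤ n * (n * (1.6033 * x + 2.855)) := by gcongr
      _ = n ^ 2 * (1.6033 * x + 2.855) := by ring
      _ ≤ n ^ 2 * (1.78375 * (x + 1.3068)) := by gcongr; linarith
      _ = (x + 1.3068) * (1.78375 * n ^ 2) := by ring
      _ ≤ (1 + (x - Real.log 2 + 1)) * S := by
        have hn2 : 0 ≤ 1.78375 * (n : ℝ) ^ 2 := by positivity
        exact mul_le_mul (by linarith) hS' hn2 (by linarith))
  refine hk.trans_lt ?_
  rw [Real.exp_add, Real.exp_log (by positivity), hl]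
  have := Real.exp_one_lt_d9
  gcongr
  linarith

lemma nthP (q : ℕ) (hq : q.Prime) (k : ℕ) (h : Nat.count Nat.Prime q = k) :
    Nat.nth Nat.Prime k = q := by rw [← h, Nat.nth_count hq]

theorem stmt18 (n : ℕ) (hn : 6 ≤ n) :
    (avgPrime (n + 1) / avgPrime n) ^ n < ((n : ℝ) / 2) * Real.log ((n : ℝ) / 2) := by
  have l1 := Real.log_two_gt_d9
  have l2 := Real.log_two_lt_d9
  have e1 := Real.exp_one_lt_d9
  have s6 : ∑ i ∈ Finset.range 6, Nat.nth Nat.Prime i = 41 := by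
    have := sum_nth_count 17
    rw [show Nat.count Nat.Prime 17 = 6 by decide +kernel] at this
    rw [this]; decide +kernel
  have p6 : Nat.nth Nat.Prime 6 = 17 := nthP 17 (by norm_num) 6 (by decide +kernel)
  have p7 : Nat.nth Nat.Prime 7 = 19 := nthP 19 (by norm_num) 7 (by decide +kernel)
  have l3 : 1.09 < Real.log 3 := by
    rw [Real.lt_log_iff_exp_lt (by norm_num)]
    have : Real.exp 1.09 ^ 100 < 3 ^ 100 := by
      rw [← Real.exp_nat_mul]
      norm_num
      rw [show (109 : ℝ) = (109 : ℕ) * 1 by norm_num, Real.exp_nat_mul]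
      calc Real.exp 1 ^ 109 < 2.7182818286 ^ 109 := by gcongr
        _ < _ := by norm_num
    exact lt_of_pow_lt_pow_left₀ 100 (by norm_num) this
  rcases lt_or_ge n 100 with h | h
  swap
  · exact large n h
  rcases lt_or_ge n 8 with h8 | h8
  · interval_cases n
    · rw [ratio_eq 6 (by norm_num) 41 (by norm_num) (by rw [s6]; norm_num), p6]
      norm_num at l3 ⊢
      linarith
    · have := key 7 (by norm_num) 1.3 (by norm_num) (by
        rw [Finset.sum_range_succ, s6, p6, p7]; norm_num)
      refine this.trans_lt ?_
      have h1 : Real.exp 1.3 < 3.8 := by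
        have : Real.exp 1.3 ^ 10 < 3.8 ^ 10 := by
          rw [← Real.exp_nat_mul]
          norm_num
          rw [show (13 : ℝ) = (13 : ℕ) * 1 by norm_num, Real.exp_nat_mul]
          calc Real.exp 1 ^ 13 < 2.7182818286 ^ 13 := by gcongr
            _ < _ := by norm_num
        exact lt_of_pow_lt_pow_left₀ 10 (by norm_num) this
      have h2 : Real.log 3 ≤ Real.log (((7 : ℕ) : ℝ) / 2) :=
        Real.log_le_log (by norm_num) (by norm_num)
      push_cast at h2 ⊢
      linarith
  · have hs := small n h8 h
    have := key n (by omega) 1.62 (by norm_num) (by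
      have : (100 : ℝ) * (n * Nat.nth Nat.Prime n)
        ≤ 262 * ((∑ i ∈ Finset.range n, Nat.nth Nat.Prime i : ℕ) : ℝ) := by exact_mod_cast hs
      linarith)
    refine this.trans_lt ?_
    have h1 : Real.exp 1.62 < 5.2 := by
      have : Real.exp 1.62 ^ 50 < 5.2 ^ 50 := by
        rw [← Real.exp_nat_mul]
        norm_num
        rw [show (81 : ℝ) = (81 : ℕ) * 1 by norm_num, Real.exp_nat_mul]
        calc Real.exp 1 ^ 81 < 2.7182818286 ^ 81 := by gcongr
          _ < _ := by norm_num
      exact lt_of_pow_lt_pow_left₀ 50 (by norm_num) this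
    have hN : (8 : ℝ) ≤ n := by exact_mod_cast h8
    have h2 : Real.log ((2 : ℝ) ^ 2) ≤ Real.log ((n : ℝ) / 2) :=
      Real.log_le_log (by norm_num) (by linarith)
    rw [Real.log_pow] at h2
    push_cast at h2
    nlinarith
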